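/- Let n ≥ 0 and I, J ∈ P_n with J ⊆ I, and let J_1, …, J_t be the runs of J, where J_k = {m_k+1, …, m_k+ℓ_k}. Set c_k(I) = 0 if m_k ∈ I and c_k(I) = 1 otherwise. Then the (I,J) entry of AM_n equals (−1)^{|J|} · ∏_{k=1}^{t} (|J_k| + 1)^{c_k(I)}; in particular every nonzero entry in column J of AM_n has sign (−1)^{|J|}. -/

import Mathlib

/-!
In block form `M_{n+1} = [[M_n, -M_n], [0, M_n]]`, so multiplying out the recursions gives
`AM_{n+1} = [[AM_n, 0], [AM_n, -(AM_n + BM_n)]]` and `BM_{n+1} = [[AM_n, 0], [0, -BM_n]]`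
(`AM_succ`, `BM_succ`). The sign claim follows by a joint induction (`sign_nonneg`).

For `J ⊆ I`, let `{m+1, …, n}` be the run of `J` ending at `n` (empty, with `m = n`, if `n ∉ J`) and
let `r` be the product of the factors of the other runs. The induction in `entries_aux` shows, up to
the sign `(-1)^|J|`, that the entry of `AM_n` is `(n - m + 1)^c * r` and that of `BM_n` is `c * r`,
where `c = 0` if `m ∈ I` and `c = 1` otherwise. Adjoining `n + 1` to `J` extends this run by one
element and keeps `m` and the other runs (`runsOf_insert_top`), so the step is the identity
`(ℓ + 1)^c + c = (ℓ + 2)^c` for `c ∈ {0, 1}`. If `n + 1 ∉ J`, then the entry of `AM` is unchanged, and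
the new run at the top is empty with `m = n + 1`, in agreement with the entry of `BM`.
-/

open Finset

/-- Restriction of a subset of `Fin (n+1)` to `Fin n` (forgetting the top element). -/
def resSet {n : ℕ} (I : Finset (Fin (n + 1))) : Finset (Fin n) :=
  Finset.univ.filter (fun j : Fin n => Fin.castSucc j ∈ I)

mutual
  /-- The matrix `A_n`, rows/columns indexed by subsets of `{1,…,n}` (element `j`
  of `[n]` corresponds to `j-1 : Fin n`, i.e. anti-lexicographic/binary order). -/
  def Amat : (n : ℕ) → Matrix (Finset (Fin n)) (Finset (Fin n)) ℤ
    | 0 => Matrix.of fun _ _ => 1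
    | n + 1 => Matrix.of fun I J =>
        if Fin.last n ∈ I then
          if Fin.last n ∈ J then - Bmat n (resSet I) (resSet J)
          else Amat n (resSet I) (resSet J)
        else Amat n (resSet I) (resSet J)
  /-- The matrix `B_n`. -/
  def Bmat : (n : ℕ) → Matrix (Finset (Fin n)) (Finset (Fin n)) ℤ
    | 0 => Matrix.of fun _ _ => 1
    | n + 1 => Matrix.of fun I J =>
        if Fin.last n ∈ I then
          if Fin.last n ∈ J then - Bmat n (resSet I) (resSet J)
          else 0
        else Amat n (resSet I) (resSet J)
end

/-- The Walsh-Hadamard matrix `H_n`. -/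
def Hmat : (n : ℕ) → Matrix (Finset (Fin n)) (Finset (Fin n)) ℤ
  | 0 => Matrix.of fun _ _ => 1
  | n + 1 => Matrix.of fun I J =>
      if Fin.last n ∈ I ∧ Fin.last n ∈ J then - Hmat n (resSet I) (resSet J)
      else Hmat n (resSet I) (resSet J)

/-- The Möbius matrix `M_n` of the boolean lattice. -/
def Mobmat (n : ℕ) : Matrix (Finset (Fin n)) (Finset (Fin n)) ℤ :=
  Matrix.of fun I J => if I ⊆ J then (-1) ^ (J \ I).card else 0

/-- The zeta matrix `Z_n` of the boolean lattice. -/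
def Zetamat (n : ℕ) : Matrix (Finset (Fin n)) (Finset (Fin n)) ℤ :=
  Matrix.of fun I J => if I ⊆ J then 1 else 0

/-- The subset of `[n] = {1,…,n}` corresponding to a subset of `Fin n`. -/
def natSet {n : ℕ} (I : Finset (Fin n)) : Finset ℕ := Finset.image (fun j : Fin n => (j : ℕ) + 1) I

/-- The ordinal number of a subset in the anti-lexicographic order. -/
def ordFin {n : ℕ} (I : Finset (Fin n)) : ℕ := ∑ j ∈ I, 2 ^ (j : ℕ)

/-- The run (maximal interval of consecutive integers) of `I` containing `j`
(empty if `j ∉ I`). -/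
def runOf (I : Finset ℕ) (j : ℕ) : Finset ℕ :=
  I.filter (fun i => ∀ k ∈ Finset.Icc (min i j) (max i j), k ∈ I)

/-- The set of runs (maximal intervals of consecutive integers) of `I`. -/
def runsOf (I : Finset ℕ) : Finset (Finset ℕ) := I.image (runOf I)

/-- `P` is a prefix of the interval `R`: it consists of an initial segment of `R`. -/
def IsPrefixOf (P R : Finset ℕ) : Prop :=
  P ⊆ R ∧ ∀ i ∈ R, ∀ j ∈ P, i ≤ j → i ∈ P


/-! ### Splitting off the top element -/

/-- The subset of `Fin (n + 1)` with the same elements as `K`, avoiding the top element. -/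
def liftSet {n : ℕ} (K : Finset (Fin n)) : Finset (Fin (n + 1)) := K.map Fin.castSuccEmb

lemma mem_resSet {n : ℕ} (K : Finset (Fin (n + 1))) (j : Fin n) :
    j ∈ resSet K ↔ j.castSucc ∈ K := by
  simp [resSet]

lemma castSucc_mem_liftSet {n : ℕ} (K : Finset (Fin n)) (j : Fin n) :
    j.castSucc ∈ liftSet K ↔ j ∈ K := by
  simp [liftSet]

lemma last_notMem_liftSet {n : ℕ} (K : Finset (Fin n)) : Fin.last n ∉ liftSet K := by
  simp [liftSet, Fin.castSucc_ne_last]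

lemma resSet_liftSet {n : ℕ} (K : Finset (Fin n)) : resSet (liftSet K) = K := by
  ext j; simp [mem_resSet, castSucc_mem_liftSet]

lemma resSet_insert_last {n : ℕ} (K : Finset (Fin (n + 1))) :
    resSet (insert (Fin.last n) K) = resSet K := by
  ext j; simp [mem_resSet, Fin.castSucc_ne_last]

lemma eq_liftSet {n : ℕ} {K : Finset (Fin (n + 1))} (h : Fin.last n ∉ K) :
    K = liftSet (resSet K) := by
  ext j
  refine Fin.lastCases ?_ (fun j => ?_) j
  · simp [h, last_notMem_liftSet]
  · simp [castSucc_mem_liftSet, mem_resSet]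

lemma eq_insert_liftSet {n : ℕ} {K : Finset (Fin (n + 1))} (h : Fin.last n ∈ K) :
    K = insert (Fin.last n) (liftSet (resSet K)) := by
  ext j
  refine Fin.lastCases ?_ (fun j => ?_) j
  · simp [h]
  · simp [castSucc_mem_liftSet, mem_resSet, Fin.castSucc_ne_last]

/-- Subsets of `Fin (n + 1)` split into those that avoid the top element (left) and those that
contain it (right). -/
def splitEquiv (n : ℕ) : Finset (Fin n) ⊕ Finset (Fin n) ≃ Finset (Fin (n + 1)) where
  toFun := Sum.elim liftSet fun K => insert (Fin.last n) (liftSet K)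
  invFun K := if Fin.last n ∈ K then Sum.inr (resSet K) else Sum.inl (resSet K)
  left_inv := by
    rintro (K | K) <;> simp [last_notMem_liftSet, resSet_liftSet, resSet_insert_last]
  right_inv := by
    intro K
    by_cases h : Fin.last n ∈ K
    · simpa [h] using (eq_insert_liftSet h).symm
    · simpa [h] using (eq_liftSet h).symm

lemma sum_split {n : ℕ} (f : Finset (Fin (n + 1)) → ℤ) :
    ∑ K, f K = ∑ K, f (liftSet K) + ∑ K, f (insert (Fin.last n) (liftSet K)) := by
  rw [← (splitEquiv n).sum_comp, Fintype.sum_sum_type]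
  rfl

lemma card_liftSet {n : ℕ} (K : Finset (Fin n)) : (liftSet K).card = K.card := by
  simp [liftSet]

lemma card_resSet_of_mem {n : ℕ} {J : Finset (Fin (n + 1))} (h : Fin.last n ∈ J) :
    J.card = (resSet J).card + 1 := by
  conv_lhs => rw [eq_insert_liftSet h]
  rw [card_insert_of_notMem (last_notMem_liftSet _), card_liftSet]

lemma card_resSet_of_notMem {n : ℕ} {J : Finset (Fin (n + 1))} (h : Fin.last n ∉ J) :
    J.card = (resSet J).card := by
  conv_lhs => rw [eq_liftSet h]
  rw [card_liftSet]

lemma resSet_mono {n : ℕ} {I J : Finset (Fin (n + 1))} (h : I ⊆ J) : resSet I ⊆ resSet J :=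
  fun _ hj => (mem_resSet _ _).2 (h ((mem_resSet _ _).1 hj))

lemma subset_iff_resSet {n : ℕ} (I J : Finset (Fin (n + 1))) :
    I ⊆ J ↔ (Fin.last n ∈ I → Fin.last n ∈ J) ∧ resSet I ⊆ resSet J := by
  refine ⟨fun h => ⟨fun hI => h hI, resSet_mono h⟩, fun h j => ?_⟩
  refine Fin.lastCases h.1 (fun j hj => ?_) j
  exact (mem_resSet _ _).1 (h.2 ((mem_resSet _ _).2 hj))

lemma resSet_sdiff {n : ℕ} (I J : Finset (Fin (n + 1))) :
    resSet (J \ I) = resSet J \ resSet I := by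
  ext j; simp [mem_resSet]

/-! ### Block recursions for the products with the Möbius matrix -/

/-- The block form `M_{n+1} = [[M_n, -M_n], [0, M_n]]`. -/
lemma Mobmat_succ {n : ℕ} (K J : Finset (Fin (n + 1))) :
    Mobmat (n + 1) K J =
      if Fin.last n ∈ K then
        if Fin.last n ∈ J then Mobmat n (resSet K) (resSet J) else 0
      else if Fin.last n ∈ J then -Mobmat n (resSet K) (resSet J)
        else Mobmat n (resSet K) (resSet J) := by
  simp only [Mobmat, Matrix.of_apply, subset_iff_resSet K J, ← resSet_sdiff]
  by_cases hK : Fin.last n ∈ K <;> by_cases hJ : Fin.last n ∈ J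
  · rw [card_resSet_of_notMem (J := J \ K) (by simp [hK])]
    simp [hK, hJ]
  · simp [hK, hJ]
  · rw [card_resSet_of_mem (J := J \ K) (by simp [hK, hJ])]
    by_cases h : resSet K ⊆ resSet J <;> simp [hK, hJ, h, pow_succ]
  · rw [card_resSet_of_notMem (J := J \ K) (by simp [hJ])]
    simp [hK, hJ]

/-- The block form `AM_{n+1} = [[AM_n, 0], [AM_n, -(AM_n + BM_n)]]`. -/
lemma AM_succ {n : ℕ} (I J : Finset (Fin (n + 1))) :
    (Amat (n + 1) * Mobmat (n + 1)) I J =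
      if Fin.last n ∈ J then
        if Fin.last n ∈ I then
          -((Amat n * Mobmat n) (resSet I) (resSet J) + (Bmat n * Mobmat n) (resSet I) (resSet J))
        else 0
      else (Amat n * Mobmat n) (resSet I) (resSet J) := by
  simp only [Matrix.mul_apply, sum_split, Mobmat_succ, Amat, Matrix.of_apply,
    last_notMem_liftSet, mem_insert_self, resSet_insert_last, resSet_liftSet]
  by_cases hI : Fin.last n ∈ I <;> by_cases hJ : Fin.last n ∈ J <;> simp [hI, hJ]
  ring

/-- The block form `BM_{n+1} = [[AM_n, 0], [0, -BM_n]]`. -/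
lemma BM_succ {n : ℕ} (I J : Finset (Fin (n + 1))) :
    (Bmat (n + 1) * Mobmat (n + 1)) I J =
      if Fin.last n ∈ J then
        if Fin.last n ∈ I then -(Bmat n * Mobmat n) (resSet I) (resSet J) else 0
      else if Fin.last n ∈ I then 0 else (Amat n * Mobmat n) (resSet I) (resSet J) := by
  simp only [Matrix.mul_apply, sum_split, Mobmat_succ, Bmat, Matrix.of_apply,
    last_notMem_liftSet, mem_insert_self, resSet_insert_last, resSet_liftSet]
  by_cases hI : Fin.last n ∈ I <;> by_cases hJ : Fin.last n ∈ J <;> simp [hI, hJ]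

lemma AM_zero (I J : Finset (Fin 0)) : (Amat 0 * Mobmat 0) I J = 1 := by
  simp [Matrix.mul_apply, Amat, Mobmat, Subsingleton.elim _ (∅ : Finset (Fin 0))]

lemma BM_zero (I J : Finset (Fin 0)) : (Bmat 0 * Mobmat 0) I J = 1 := by
  simp [Matrix.mul_apply, Bmat, Mobmat, Subsingleton.elim _ (∅ : Finset (Fin 0))]

/-! ### Signs -/

/-- The sign claim, proved for `A` and `B` together since the recursions are coupled. -/
lemma sign_nonneg (n : ℕ) (I J : Finset (Fin n)) :
    0 ≤ (-1) ^ J.card * (Amat n * Mobmat n) I J ∧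
      0 ≤ (-1) ^ J.card * (Bmat n * Mobmat n) I J := by
  induction n with
  | zero => simp [AM_zero, BM_zero, Subsingleton.elim J ∅]
  | succ n ih =>
    obtain ⟨hA, hB⟩ := ih (resSet I) (resSet J)
    rw [AM_succ, BM_succ]
    by_cases hJ : Fin.last n ∈ J
    · rw [card_resSet_of_mem hJ]
      by_cases hI : Fin.last n ∈ I <;> simp only [hI, hJ, if_true, if_false, pow_succ]
      · constructor <;> linarith
      · simp
    · rw [card_resSet_of_notMem hJ]
      by_cases hI : Fin.last n ∈ I <;> simp [hI, hJ, hA]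

/-! ### Runs -/

lemma natSet_le {n : ℕ} (J : Finset (Fin n)) {k : ℕ} (hk : k ∈ natSet J) : k ≤ n := by
  simp only [natSet, mem_image] at hk
  obtain ⟨j, -, rfl⟩ := hk
  omega

lemma natSet_liftSet {n : ℕ} (J : Finset (Fin n)) : natSet (liftSet J) = natSet J := by
  ext k; simp [natSet, liftSet]

lemma natSet_of_notMem {n : ℕ} {J : Finset (Fin (n + 1))} (h : Fin.last n ∉ J) :
    natSet J = natSet (resSet J) := by
  conv_lhs => rw [eq_liftSet h, natSet_liftSet]

lemma natSet_of_mem {n : ℕ} {J : Finset (Fin (n + 1))} (h : Fin.last n ∈ J) :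
    natSet J = insert (n + 1) (natSet (resSet J)) := by
  conv_lhs => rw [eq_insert_liftSet h]
  rw [← natSet_liftSet (resSet J)]
  simp [natSet]

lemma mem_runOf {T : Finset ℕ} {i j : ℕ} :
    i ∈ runOf T j ↔ ∀ k, min i j ≤ k → k ≤ max i j → k ∈ T := by
  simp only [runOf, mem_filter, mem_Icc, and_imp]
  exact ⟨fun h => h.2, fun h => ⟨h i (min_le_left _ _) (le_max_left _ _), h⟩⟩

lemma mem_runOf_self {T : Finset ℕ} {j : ℕ} (h : j ∈ T) : j ∈ runOf T j := by
  rw [mem_runOf]; intro k h1 h2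
  obtain rfl : k = j := by omega
  exact h

lemma runOf_eq_of_mem {T : Finset ℕ} {i j : ℕ} (h : i ∈ runOf T j) : runOf T i = runOf T j := by
  rw [mem_runOf] at h
  ext l
  simp only [mem_runOf]
  constructor <;> intro hl k h1 h2
  all_goals
    by_cases hk : min i j ≤ k ∧ k ≤ max i j
    · exact h k hk.1 hk.2
    · exact hl k (by omega) (by omega)

lemma runOf_of_notMem {T : Finset ℕ} {j : ℕ} (h : j ∉ T) : runOf T j = ∅ := by
  ext i
  simp only [mem_runOf, notMem_empty, iff_false]
  exact fun hi => h (hi j (min_le_right _ _) (le_max_right _ _))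

lemma empty_notMem_runsOf (T : Finset ℕ) : ∅ ∉ runsOf T := by
  simp only [runsOf, mem_image, not_exists, not_and]
  intro j hj h
  simpa [h] using mem_runOf_self hj

lemma runOf_insert_top {n : ℕ} {T : Finset ℕ} (hT : ∀ k ∈ T, k ≤ n) :
    runOf (insert (n + 1) T) (n + 1) = insert (n + 1) (runOf T n) := by
  ext i
  simp only [mem_insert, mem_runOf]
  constructor
  · intro h
    have hi := h i (by omega) (by omega)
    refine or_iff_not_imp_left.2 fun hne k h1 h2 => ?_
    have hin := hT i (hi.resolve_left hne)
    exact (h k (by omega) (by omega)).resolve_left (by omega)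
  · rintro (rfl | h) k h1 h2
    · left; omega
    · have hin := hT i (h i (by omega) (by omega))
      refine or_iff_not_imp_left.2 fun hne => h k (by omega) (by omega)

lemma runOf_insert_of_notMem {n j : ℕ} {T : Finset ℕ} (hT : ∀ k ∈ T, k ≤ n) (hj : j ∈ T)
    (hjn : j ∉ runOf T n) : runOf (insert (n + 1) T) j = runOf T j := by
  have hjle := hT j hj
  ext i
  simp only [mem_runOf, mem_insert] at hjn ⊢
  constructor
  · intro h k h1 h2
    refine (h k h1 h2).resolve_left ?_
    rintro rfl
    refine hjn fun l h3 h4 => (h l (by omega) (by omega)).resolve_left (by omega)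
  · exact fun h k h1 h2 => Or.inr (h k h1 h2)

/-- Adding `n + 1` above `T` extends the run of `T` ending at `n` and leaves the other runs alone.
If `n ∉ T`, that run is the empty set, which is not a member of `runsOf T`, and the singleton
`{n + 1}` is added. -/
lemma runsOf_insert_top {n : ℕ} {T : Finset ℕ} (hT : ∀ k ∈ T, k ≤ n) :
    runsOf (insert (n + 1) T) =
      insert (insert (n + 1) (runOf T n)) ((runsOf T).erase (runOf T n)) := by
  have key : ∀ j ∈ T, runOf (insert (n + 1) T) j =
      if runOf T j = runOf T n then insert (n + 1) (runOf T n) else runOf T j := by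
    intro j hj
    by_cases hjn : j ∈ runOf T n
    · rw [if_pos (runOf_eq_of_mem hjn), ← runOf_insert_top hT]
      refine runOf_eq_of_mem ?_
      rw [runOf_insert_top hT]
      exact mem_insert_of_mem hjn
    · rw [if_neg, runOf_insert_of_notMem hT hj hjn]
      exact fun h => hjn (h ▸ mem_runOf_self hj)
  ext R
  simp only [runsOf, image_insert, mem_insert, mem_image, mem_erase, runOf_insert_top hT]
  constructor
  · rintro (h | ⟨j, hj, rfl⟩)
    · exact Or.inl h
    · rw [key j hj]
      split_ifs with h
      · exact Or.inl rfl
      · exact Or.inr ⟨h, j, hj, rfl⟩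
  · rintro (h | ⟨hne, j, hj, rfl⟩)
    · exact Or.inl h
    · exact Or.inr ⟨j, hj, by rw [key j hj, if_neg hne]⟩

/-! ### Factors of runs -/

/-- The factor contributed by a run `R` for the row `S`. It equals `1` at `R = ∅`. -/
def runWt (S R : Finset ℕ) : ℤ :=
  ((R.card : ℤ) + 1) ^ (if R.min.getD 1 - 1 ∈ S then 0 else 1)

lemma runWt_empty (S : Finset ℕ) : runWt S ∅ = 1 := by simp [runWt]

lemma min_Icc_getD {a b : ℕ} (h : a ≤ b) : (Icc a b).min.getD 1 = a := by
  have : (Icc a b).min = (a : WithTop ℕ) :=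
    le_antisymm (Finset.min_le (by simpa using h))
      (Finset.le_min fun x hx => by simpa using (mem_Icc.1 hx).1)
  rw [this]; rfl

/-- The factor of the run `{m+1, …, n}`; it is `1` when this interval is empty. -/
lemma runWt_Icc (S : Finset ℕ) {m n : ℕ} (h : m ≤ n) :
    runWt S (Icc (m + 1) n) = if m ∈ S then 1 else ((n - m : ℕ) : ℤ) + 1 := by
  obtain rfl | hlt := h.eq_or_lt
  · simp [runWt_empty]
  · rw [runWt, min_Icc_getD hlt]
    by_cases hm : m ∈ S <;> simp [hm]

lemma runWt_insert {n : ℕ} {R : Finset ℕ} (S : Finset ℕ) (hR : ∀ k ∈ R, k ≤ n) :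
    runWt (insert (n + 1) S) R = runWt S R := by
  obtain rfl | hne := R.eq_empty_or_nonempty
  · simp [runWt_empty]
  · have hmin : R.min.getD 1 ≤ n := by
      obtain ⟨a, ha⟩ := Finset.min_of_nonempty hne
      rw [ha]
      exact hR a (Finset.mem_of_min ha)
    have : R.min.getD 1 - 1 ≠ n + 1 := by omega
    simp [runWt, this]

lemma le_of_mem_runsOf {n : ℕ} {T R : Finset ℕ} (hT : ∀ k ∈ T, k ≤ n) (hR : R ∈ runsOf T) :
    ∀ k ∈ R, k ≤ n := by
  obtain ⟨j, -, rfl⟩ := mem_image.1 hR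
  exact fun k hk => hT k (mem_filter.1 hk).1

/-- The factor of the run through `n` can be split off even if that run is empty. -/
lemma prod_runsOf_split (S T : Finset ℕ) (n : ℕ) :
    ∏ R ∈ runsOf T, runWt S R =
      runWt S (runOf T n) * ∏ R ∈ (runsOf T).erase (runOf T n), runWt S R := by
  by_cases h : n ∈ T
  · exact (mul_prod_erase _ _ (mem_image_of_mem _ h)).symm
  · rw [runOf_of_notMem h, runWt_empty, one_mul, erase_eq_of_notMem (empty_notMem_runsOf T)]

/-! ### The entries -/

/-- Entries of `AM_n` and `BM_n` at `J ⊆ I`. The run of `J` ending at `n` is `{m+1, …, n}`, empty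
for `m = n`; the entry of `BM_n` vanishes if `m ∈ I` and otherwise is the product over the
remaining runs. -/
lemma entries_aux (n : ℕ) (I J : Finset (Fin n)) (hJI : J ⊆ I) :
    ∃ m ≤ n, runOf (natSet J) n = Icc (m + 1) n ∧
      (Amat n * Mobmat n) I J =
        (-1) ^ J.card * ∏ R ∈ runsOf (natSet J), runWt (natSet I) R ∧
      (Bmat n * Mobmat n) I J =
        (-1) ^ J.card * if m ∈ natSet I then 0 else
          ∏ R ∈ (runsOf (natSet J)).erase (runOf (natSet J) n), runWt (natSet I) R := by
  induction n with
  | zero =>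
    refine ⟨0, le_rfl, ?_⟩
    simp [AM_zero, BM_zero, Subsingleton.elim J ∅, Subsingleton.elim I ∅, natSet, runsOf, runOf_of_notMem]
  | succ n ih =>
    obtain ⟨m, hm, hrun, hA, hB⟩ := ih (resSet I) (resSet J) (resSet_mono hJI)
    have hT : ∀ k ∈ natSet (resSet J), k ≤ n := fun k => natSet_le _
    have hS : ∀ k ∈ natSet (resSet I), k ≤ n := fun k => natSet_le _
    -- Whether `n + 1 ∈ I` does not affect the factors of the runs of `J` below `n + 1`.
    have hwt : ∀ R ∈ runsOf (natSet (resSet J)),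
        runWt (natSet I) R = runWt (natSet (resSet I)) R := by
      intro R hR
      by_cases hI : Fin.last n ∈ I
      · rw [natSet_of_mem hI, runWt_insert _ (le_of_mem_runsOf hT hR)]
      · rw [natSet_of_notMem hI]
    rw [AM_succ, BM_succ, hA, hB]
    by_cases hJ : Fin.last n ∈ J
    · have hI := hJI hJ
      have hnot : insert (n + 1) (runOf (natSet (resSet J)) n) ∉
          (runsOf (natSet (resSet J))).erase (runOf (natSet (resSet J)) n) := fun h => by
        have := le_of_mem_runsOf hT (mem_of_mem_erase h) (n + 1) (mem_insert_self _ _)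
        omega
      have hIcc : insert (n + 1) (Icc (m + 1) n) = Icc (m + 1) (n + 1) := by
        ext k; simp only [mem_insert, mem_Icc]; omega
      have hmI : m ∈ natSet I ↔ m ∈ natSet (resSet I) := by
        rw [natSet_of_mem hI, mem_insert]
        exact or_iff_right (by omega)
      have hprod := prod_congr rfl fun R hR =>
        hwt R (mem_of_mem_erase (a := runOf (natSet (resSet J)) n) hR)
      refine ⟨m, by omega, ?_, ?_, ?_⟩
      · rw [natSet_of_mem hJ, runOf_insert_top hT, hrun, hIcc]
      · rw [if_pos hJ, if_pos hI, natSet_of_mem hJ, runsOf_insert_top hT, prod_insert hnot, hprod,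
          prod_runsOf_split _ _ n, card_resSet_of_mem hJ, hrun, hIcc, runWt_Icc _ hm,
          runWt_Icc _ (by omega : m ≤ n + 1), Nat.succ_sub hm]
        simp only [hmI]
        split_ifs <;> push_cast <;> ring
      · rw [if_pos hJ, if_pos hI, natSet_of_mem hJ, runsOf_insert_top hT, runOf_insert_top hT,
          erase_insert hnot, hprod, card_resSet_of_mem hJ]
        simp only [hmI]
        ring
    · have hn : n + 1 ∉ natSet (resSet J) := fun h => by have := hT _ h; omega
      refine ⟨n + 1, le_rfl, ?_, ?_, ?_⟩
      · rw [natSet_of_notMem hJ, runOf_of_notMem hn]; simp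
      · rw [if_neg hJ, natSet_of_notMem hJ, card_resSet_of_notMem hJ, prod_congr rfl hwt]
      · rw [if_neg hJ, natSet_of_notMem hJ, card_resSet_of_notMem hJ, runOf_of_notMem hn,
          erase_eq_of_notMem (empty_notMem_runsOf _), prod_congr rfl hwt]
        by_cases hI : Fin.last n ∈ I
        · simp [hI, natSet_of_mem hI]
        · have : n + 1 ∉ natSet (resSet I) := fun h => by have := hS _ h; omega
          simp [hI, natSet_of_notMem hI, this]

/-- Entries of `AM_n = A_n · M_n` in column `J`, for `J ⊆ I`:
`(AM_n)_{I,J} = (−1)^{|J|} ∏_k (|J_k|+1)^{c_k(I)}`, where `J_k` are the runs of `J`,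
`m_k = min J_k − 1`, and `c_k(I) = 0` if `m_k ∈ I`, `1` otherwise; in particular
every nonzero entry of column `J` has sign `(−1)^{|J|}`. -/
theorem AM_entries (n : ℕ) (I J : Finset (Fin n)) (hJI : J ⊆ I) :
    (Amat n * Mobmat n) I J =
      (-1) ^ J.card *
        ∏ R ∈ runsOf (natSet J),
          ((R.card : ℤ) + 1) ^ (if R.min.getD 1 - 1 ∈ natSet I then 0 else 1) ∧
    (∀ I' : Finset (Fin n), (Amat n * Mobmat n) I' J ≠ 0 →
      ((Amat n * Mobmat n) I' J).sign = (-1) ^ J.card) := by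
  obtain ⟨_, _, _, hA, _⟩ := entries_aux n I J hJI
  refine ⟨hA, fun I' hne => ?_⟩
  have h := (sign_nonneg n I' J).1
  rcases neg_one_pow_eq_or ℤ J.card with hs | hs <;> rw [hs] at h ⊢
  · exact Int.sign_eq_one_of_pos (by omega)
  · exact Int.sign_eq_neg_one_of_neg (by omega)
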